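/- arXiv:2009.02921 — 2 statements merged into one kernel-verified Lean document; each statement's English description precedes it below -/
import Mathlib

section
/- The function κ ↦ I_{d/2}(κ)/I_{d/2−1}(κ) is strictly increasing on [0, ∞), maps [0, ∞) into [0, 1), and equals 0 only at κ = 0. -/
open scoped RealInnerProductSpace BigOperators ENNReal NNReal Classical
open MeasureTheory Filter Real ProbabilityTheory Asymptotics

/-- Modified Bessel function of the first kind of order `r`. -/
noncomputable def besselI (r z : ℝ) : ℝ :=
  ∑' m : ℕ, (z / 2) ^ (2 * (m : ℝ) + r) / ((Nat.factorial m) * Real.Gamma ((m : ℝ) + r + 1))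

/-- Normalizing constant of the `d`-dimensional von Mises-Fisher density. -/
noncomputable def vmfConst (d : ℕ) (κ : ℝ) : ℝ :=
  κ ^ ((d : ℝ) / 2 - 1) / ((2 * Real.pi) ^ ((d : ℝ) / 2) * besselI ((d : ℝ) / 2 - 1) κ)

/-- von Mises-Fisher density with mean direction `μ` and concentration `κ`. -/
noncomputable def vmfDensity (d : ℕ) (μ x : EuclideanSpace ℝ (Fin d)) (κ : ℝ) : ℝ :=
  vmfConst d κ * Real.exp (κ * ⟪μ, x⟫)

/-- The unit sphere `S^{d-1}` in `ℝ^d`. -/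
abbrev Sph (d : ℕ) := Metric.sphere (0 : EuclideanSpace ℝ (Fin d)) 1

/-- Open geodesic ball of radius `r` centered at `μ` on the unit sphere. -/
noncomputable def gBall {d : ℕ} (μ : Sph d) (r : ℝ) : Set (Sph d) :=
  {y | Real.arccos ⟪(μ : EuclideanSpace ℝ (Fin d)), (y : EuclideanSpace ℝ (Fin d))⟫ < r}

/-- Surface measure on the unit sphere, realized as `(d-1)`-dimensional Hausdorff measure. -/
noncomputable def sphMeasure (d : ℕ) : Measure (Sph d) := μH[(d : ℝ) - 1]

/-- The constant `A₂ = 2^{d-1} · 2π^{(d-1)/2} / Γ((d-1)/2)`. -/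
noncomputable def A2val (d : ℕ) : ℝ :=
  2 ^ (d - 1) * (2 * Real.pi ^ (((d : ℝ) - 1) / 2) / Real.Gamma (((d : ℝ) - 1) / 2))

/-- The `m`-th Taylor coefficient of the entire function `x ^ (-r) * besselI r (2 * x)` in the
variable `x ^ 2`. -/
noncomputable def besselCoeff (r : ℝ) (m : ℕ) : ℝ :=
  1 / ((Nat.factorial m) * Real.Gamma ((m : ℝ) + r + 1))

lemma besselCoeff_pos {r : ℝ} (hr : 0 ≤ r) (m : ℕ) : 0 < besselCoeff r m := by
  have := Real.Gamma_pos_of_pos (show 0 < (m : ℝ) + r + 1 by positivity)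
  unfold besselCoeff
  positivity

lemma besselCoeff_eq_mul {r : ℝ} (hr : 0 ≤ r) (m : ℕ) :
    besselCoeff r m = (m + r + 1) * besselCoeff (r + 1) m := by
  have h0 : 0 < (m : ℝ) + r + 1 := by positivity
  have hΓ := Real.Gamma_pos_of_pos h0
  have h : Real.Gamma ((m : ℝ) + (r + 1) + 1) = (m + r + 1) * Real.Gamma (m + r + 1) := by
    rw [← Real.Gamma_add_one h0.ne']
    ring_nf
  unfold besselCoeff
  rw [h]
  field_simp

lemma succ_mul_besselCoeff_succ (r : ℝ) (m : ℕ) :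
    (m + 1 : ℝ) * besselCoeff r (m + 1) = besselCoeff (r + 1) m := by
  unfold besselCoeff
  rw [Nat.factorial_succ]
  push_cast
  rw [show (m : ℝ) + 1 + r + 1 = m + (r + 1) + 1 by ring]
  have : (m : ℝ) + 1 ≠ 0 := by positivity
  rw [mul_one_div, mul_assoc, div_mul_eq_div_div, div_self this]

lemma summable_besselCoeff {r : ℝ} (hr : 0 ≤ r) {t : ℝ} (ht : 0 ≤ t) :
    Summable fun m => besselCoeff r m * t ^ m := by
  have hΓ : 0 < Real.Gamma (r + 1) := Real.Gamma_pos_of_pos (by positivity)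
  have hle (m : ℕ) : Real.Gamma (r + 1) ≤ Real.Gamma (m + r + 1) := by
    induction m with
    | zero => simp
    | succ m ih =>
      have h0 : 0 < (m : ℝ) + r + 1 := by positivity
      have h : Real.Gamma (((m + 1 : ℕ) : ℝ) + r + 1)
          = (m + r + 1) * Real.Gamma (m + r + 1) := by
        rw [← Real.Gamma_add_one h0.ne']
        push_cast
        ring_nf
      rw [h]
      have : (0 : ℝ) ≤ m + r := by positivity
      nlinarith
  refine Summable.of_nonneg_of_le (fun m => mul_nonneg (besselCoeff_pos hr m).le (by positivity))
    (fun m => ?_) ((Real.summable_pow_div_factorial t).mul_left (1 / Real.Gamma (r + 1)))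
  rw [show 1 / Real.Gamma (r + 1) * (t ^ m / m.factorial)
    = 1 / (m.factorial * Real.Gamma (r + 1)) * t ^ m by field_simp]
  unfold besselCoeff
  gcongr
  exact hle m

lemma besselI_eq_rpow_mul_tsum (r : ℝ) {z : ℝ} (hz : 0 < z) :
    besselI r z = (z / 2) ^ r * ∑' m, besselCoeff r m * ((z / 2) ^ 2) ^ m := by
  unfold besselI
  rw [← tsum_mul_left]
  refine tsum_congr fun m => ?_
  rw [Real.rpow_add (by positivity), show 2 * (m : ℝ) = ((2 * m : ℕ) : ℝ) by push_cast; rfl,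
    Real.rpow_natCast, pow_mul, besselCoeff]
  ring

lemma besselI_zero_right {r : ℝ} (hr : 0 < r) : besselI r 0 = 0 := by
  unfold besselI
  have (m : ℕ) : (0 : ℝ) ^ (2 * (m : ℝ) + r) = 0 := by
    rw [Real.zero_rpow (by positivity)]
  simp only [this, zero_div, tsum_zero]

/-- The `n`-th coefficient of the square of the power series with coefficients `a`. -/
def sqCoeff (a : ℕ → ℝ) (n : ℕ) : ℝ :=
  ∑ k ∈ Finset.HasAntidiagonal.antidiagonal n, a k.1 * a k.2

lemma sqCoeff_mul_pow (a : ℕ → ℝ) (t : ℝ) (n : ℕ) :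
    ∑ k ∈ Finset.HasAntidiagonal.antidiagonal n, a k.1 * t ^ k.1 * (a k.2 * t ^ k.2) = sqCoeff a n * t ^ n := by
  rw [sqCoeff, Finset.sum_mul]
  refine Finset.sum_congr rfl fun k hk => ?_
  rw [← Finset.HasAntidiagonal.mem_antidiagonal.1 hk, pow_add]
  ring

lemma hasSum_sqCoeff {a : ℕ → ℝ} {t : ℝ} (h : Summable fun n => a n * t ^ n) :
    HasSum (fun n => sqCoeff a n * t ^ n) ((∑' n, a n * t ^ n) ^ 2) := by
  have hs := (summable_norm_sum_mul_antidiagonal_of_summable_norm h.norm h.norm).of_norm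
  simp only [sqCoeff_mul_pow] at hs
  rw [sq, tsum_mul_tsum_eq_tsum_sum_antidiagonal_of_summable_norm h.norm h.norm]
  simp only [sqCoeff_mul_pow]
  exact hs.hasSum

lemma sqCoeff_pos {a : ℕ → ℝ} (ha : ∀ n, 0 < a n) (n : ℕ) : 0 < sqCoeff a n :=
  Finset.sum_pos (fun _ _ => mul_pos (ha _) (ha _)) ⟨(0, n), by simp⟩

lemma sqCoeff_weighted (a : ℕ → ℝ) (c : ℝ) (n : ℕ) :
    (n + 2 * c) * sqCoeff a n = 2 * ∑ k ∈ Finset.HasAntidiagonal.antidiagonal n,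
      (k.1 + c) * (a k.1 * a k.2) := by
  have hswap : ∑ k ∈ Finset.HasAntidiagonal.antidiagonal n, ((k.1 : ℝ) + c) * (a k.1 * a k.2)
      = ∑ k ∈ Finset.HasAntidiagonal.antidiagonal n, ((k.2 : ℝ) + c) * (a k.1 * a k.2) := by
    rw [← Finset.Nat.sum_antidiagonal_swap]
    refine Finset.sum_congr rfl fun k _ => ?_
    simp only [Prod.fst_swap, Prod.snd_swap]
    ring
  rw [two_mul (Finset.sum _ _)]
  nth_rewrite 2 [hswap]
  rw [← Finset.sum_add_distrib, sqCoeff, Finset.mul_sum]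
  refine Finset.sum_congr rfl fun k hk => ?_
  rw [← Finset.HasAntidiagonal.mem_antidiagonal.1 hk]
  push_cast
  ring

lemma sqCoeff_besselCoeff_succ {r : ℝ} (hr : 0 ≤ r) (n : ℕ) :
    (n + 1 : ℝ) * sqCoeff (besselCoeff r) (n + 1)
      = (n + 2 * r + 2) * sqCoeff (besselCoeff (r + 1)) n := by
  have h1 := sqCoeff_weighted (besselCoeff r) 0 (n + 1)
  have h2 := sqCoeff_weighted (besselCoeff (r + 1)) (r + 1) n
  rw [Finset.Nat.sum_antidiagonal_succ] at h1
  push_cast at h1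
  rw [show (n : ℝ) + 2 * r + 2 = n + 2 * (r + 1) by ring, h2,
    show (n : ℝ) + 1 = n + 1 + 2 * 0 by ring, h1]
  simp only [add_zero, zero_mul, zero_add]
  congr 1
  rw [← Finset.Nat.sum_antidiagonal_swap]
  refine Finset.sum_congr rfl fun k _ => ?_
  simp only [Prod.fst_swap, Prod.snd_swap]
  rw [← mul_assoc, succ_mul_besselCoeff_succ, besselCoeff_eq_mul hr k.1]
  ring

/-- A quotient of power series whose coefficients have strictly increasing ratios is strictly
increasing. -/
lemma hasSum_div_lt_of_strictMono {p r : ℕ → ℝ} (hp : ∀ n, 0 < p n) (hr : StrictMono r)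
    {s t P Q P' Q' : ℝ} (hs : 0 < s) (hst : s < t)
    (hP : HasSum (fun n => p n * s ^ n) P) (hQ : HasSum (fun n => r n * p n * s ^ n) Q)
    (hP' : HasSum (fun n => p n * t ^ n) P') (hQ' : HasSum (fun n => r n * p n * t ^ n) Q') :
    Q / P < Q' / P' := by
  have ht : 0 < t := hs.trans hst
  have hP0 : 0 < P := hP.tsum_eq ▸ hP.summable.tsum_pos
    (fun n => (mul_pos (hp n) (pow_pos hs n)).le) 0 (mul_pos (hp 0) (pow_pos hs 0))
  have hP0' : 0 < P' := hP'.tsum_eq ▸ hP'.summable.tsum_pos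
    (fun n => (mul_pos (hp n) (pow_pos ht n)).le) 0 (mul_pos (hp 0) (pow_pos ht 0))
  set R := Q / P with hR
  have hsum : HasSum (fun n => (r n - R) * p n * s ^ n) 0 := by
    have h := hQ.sub (hP.mul_left R)
    rw [hR, div_mul_cancel₀ _ hP0.ne', sub_self, ← hR] at h
    simpa only [sub_mul, mul_assoc] using h
  have hsum' : HasSum (fun n => (r n - R) * p n * t ^ n) (Q' - R * P') := by
    simpa only [sub_mul, mul_assoc] using hQ'.sub (hP'.mul_left R)
  have hex : ∃ n, R ≤ r n := by
    by_contra! h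
    have := hasSum_lt (i := 0) (fun n => mul_nonpos_of_nonpos_of_nonneg
      (mul_nonpos_of_nonpos_of_nonneg (sub_nonpos.2 (h n).le) (hp n).le) (pow_pos hs n).le)
      (mul_neg_of_neg_of_pos (mul_neg_of_neg_of_pos (sub_neg.2 (h 0)) (hp 0)) (pow_pos hs 0))
      hsum hasSum_zero
    exact lt_irrefl _ this
  have h0 : r 0 < R := by
    by_contra! h
    have hlt : R < r 1 := h.trans_lt (hr one_pos)
    have := hasSum_lt (i := 1) (g := fun n => (r n - R) * p n * s ^ n) (fun n => mul_nonneg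
      (mul_nonneg (sub_nonneg.2 (h.trans (hr.monotone n.zero_le))) (hp n).le) (pow_pos hs n).le)
      (mul_pos (mul_pos (sub_pos.2 hlt) (hp 1)) (pow_pos hs 1)) hasSum_zero hsum
    exact lt_irrefl _ this
  obtain ⟨N, hN, hlt⟩ : ∃ N, R ≤ r N ∧ ∀ n < N, r n < R :=
    ⟨Nat.find hex, Nat.find_spec hex, fun n hn => not_le.1 (Nat.find_min hex hn)⟩
  have hN0 : N ≠ 0 := by rintro rfl; exact absurd hN (not_le.2 h0)
  set q := t / s with hq
  have hq1 : 1 < q := (one_lt_div hs).2 hst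
  have hqt (n : ℕ) : t ^ n = q ^ n * s ^ n := by rw [← mul_pow, hq, div_mul_cancel₀ _ hs.ne']
  have hpos : 0 < Q' - R * P' := by
    refine hasSum_lt (i := 0) (f := fun n => q ^ N * ((r n - R) * p n * s ^ n)) (fun n => ?_) ?_
      (by simpa using hsum.mul_left (q ^ N)) hsum'
    · have hps : 0 < p n * s ^ n := mul_pos (hp n) (pow_pos hs n)
      have key : 0 ≤ (r n - R) * (q ^ n - q ^ N) := by
        rcases lt_or_ge n N with h | h
        · exact mul_nonneg_of_nonpos_of_nonpos (sub_nonpos.2 (hlt n h).le)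
            (sub_nonpos.2 (pow_le_pow_right₀ hq1.le h.le))
        · exact mul_nonneg (sub_nonneg.2 (hN.trans (hr.monotone h)))
            (sub_nonneg.2 (pow_le_pow_right₀ hq1.le h))
      have := mul_nonneg key hps.le
      simp only [hqt n]
      linarith
    · have := one_lt_pow₀ hq1 hN0
      have h1 : (r 0 - R) * p 0 < 0 := mul_neg_of_neg_of_pos (sub_neg.2 h0) (hp 0)
      simp only [pow_zero, mul_one]
      nlinarith
  rw [lt_div_iff₀ hP0']
  linarith

lemma tsum_besselCoeff_pos {r : ℝ} (hr : 0 ≤ r) {t : ℝ} (ht : 0 < t) :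
    0 < ∑' m, besselCoeff r m * t ^ m :=
  (summable_besselCoeff hr ht.le).tsum_pos
    (fun n => (mul_pos (besselCoeff_pos hr n) (pow_pos ht n)).le) 0
    (mul_pos (besselCoeff_pos hr 0) (pow_pos ht 0))

lemma besselI_pos {r : ℝ} (hr : 0 ≤ r) {z : ℝ} (hz : 0 < z) : 0 < besselI r z := by
  rw [besselI_eq_rpow_mul_tsum r hz]
  exact mul_pos (by positivity) (tsum_besselCoeff_pos hr (by positivity))

lemma hasSum_mul_sq_tsum_besselCoeff {r : ℝ} (hr : 0 ≤ r) {t : ℝ} (ht : 0 ≤ t) :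
    HasSum (fun n : ℕ => (n / (n + (2 * r + 1)) : ℝ) * sqCoeff (besselCoeff r) n * t ^ n)
      (t * (∑' m, besselCoeff (r + 1) m * t ^ m) ^ 2) := by
  rw [← hasSum_nat_add_iff' 1]
  rw [Finset.sum_range_one, Nat.cast_zero, zero_div, zero_mul, zero_mul, sub_zero]
  have heq (n : ℕ) : (((n + 1 : ℕ) : ℝ) / (((n + 1 : ℕ) : ℝ) + (2 * r + 1)))
      * sqCoeff (besselCoeff r) (n + 1) * t ^ (n + 1)
      = t * (sqCoeff (besselCoeff (r + 1)) n * t ^ n) := by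
    have h := sqCoeff_besselCoeff_succ hr n
    have h0 : (n : ℝ) + 1 + (2 * r + 1) ≠ 0 := by positivity
    push_cast
    rw [div_mul_eq_mul_div, h, pow_succ]
    field_simp
    ring
  simp only [heq]
  exact (hasSum_sqCoeff (summable_besselCoeff (r := r + 1) (by positivity) ht)).mul_left t

lemma besselI_ratio_sq {r : ℝ} {z : ℝ} (hz : 0 < z) :
    (besselI (r + 1) z / besselI r z) ^ 2
      = (z / 2) ^ 2 * (∑' m, besselCoeff (r + 1) m * ((z / 2) ^ 2) ^ m) ^ 2
        / (∑' m, besselCoeff r m * ((z / 2) ^ 2) ^ m) ^ 2 := by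
  rw [besselI_eq_rpow_mul_tsum _ hz, besselI_eq_rpow_mul_tsum _ hz,
    Real.rpow_add_one (by positivity), mul_assoc, mul_div_mul_left _ _ (by positivity), div_pow,
    mul_pow]

lemma strictMono_div_add {c : ℝ} (hc : 0 < c) : StrictMono fun n : ℕ => (n / (n + c) : ℝ) := by
  intro m n hmn
  have : (m : ℝ) < n := by exact_mod_cast hmn
  simp only
  rw [div_lt_div_iff₀ (by positivity) (by positivity)]
  nlinarith

lemma besselI_ratio_lt {r : ℝ} (hr : 0 ≤ r) {x y : ℝ} (hx : 0 < x) (hxy : x < y) :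
    besselI (r + 1) x / besselI r x < besselI (r + 1) y / besselI r y := by
  have hy := hx.trans hxy
  have hy0 : 0 < besselI (r + 1) y / besselI r y :=
    div_pos (besselI_pos (by positivity) hy) (besselI_pos hr hy)
  refine lt_of_pow_lt_pow_left₀ 2 hy0.le ?_
  rw [besselI_ratio_sq hx, besselI_ratio_sq hy]
  exact hasSum_div_lt_of_strictMono (sqCoeff_pos (besselCoeff_pos hr))
    (strictMono_div_add (c := 2 * r + 1) (by positivity)) (by positivity) (by gcongr)
    (hasSum_sqCoeff (summable_besselCoeff hr (by positivity)))
    (hasSum_mul_sq_tsum_besselCoeff hr (by positivity))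
    (hasSum_sqCoeff (summable_besselCoeff hr (by positivity)))
    (hasSum_mul_sq_tsum_besselCoeff hr (by positivity))

lemma besselI_ratio_lt_one {r : ℝ} (hr : 0 ≤ r) {x : ℝ} (hx : 0 < x) :
    besselI (r + 1) x / besselI r x < 1 := by
  refine lt_of_pow_lt_pow_left₀ 2 zero_le_one ?_
  rw [besselI_ratio_sq hx, one_pow,
    div_lt_one (pow_pos (tsum_besselCoeff_pos hr (by positivity)) 2)]
  have hlt (n : ℕ) : (n / (n + (2 * r + 1)) : ℝ) * sqCoeff (besselCoeff r) n * ((x / 2) ^ 2) ^ n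
      < sqCoeff (besselCoeff r) n * ((x / 2) ^ 2) ^ n := by
    have h1 : (n / (n + (2 * r + 1)) : ℝ) < 1 := by
      rw [div_lt_one (by positivity)]
      linarith
    have := sqCoeff_pos (besselCoeff_pos hr) n
    rw [mul_assoc]
    exact mul_lt_of_lt_one_left (by positivity) h1
  exact hasSum_lt (i := 0) (fun n => (hlt n).le) (hlt 0)
    (hasSum_mul_sq_tsum_besselCoeff hr (by positivity))
    (hasSum_sqCoeff (summable_besselCoeff hr (by positivity)))

/-- the Bessel ratio `A_d(κ) = I_{d/2}(κ)/I_{d/2-1}(κ)` is strictly increasing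
on `[0,∞)`, maps into `[0,1)`, and vanishes only at `κ = 0`. -/
theorem besselRatio_props (d : ℕ) (hd : 2 ≤ d) :
    StrictMonoOn (fun κ => besselI ((d : ℝ) / 2) κ / besselI ((d : ℝ) / 2 - 1) κ)
        (Set.Ici (0 : ℝ)) ∧
    (∀ κ : ℝ, 0 ≤ κ →
      besselI ((d : ℝ) / 2) κ / besselI ((d : ℝ) / 2 - 1) κ ∈ Set.Ico (0 : ℝ) 1) ∧
    (∀ κ : ℝ, 0 ≤ κ →
      (besselI ((d : ℝ) / 2) κ / besselI ((d : ℝ) / 2 - 1) κ = 0 ↔ κ = 0)) := by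
  have hd' : (2 : ℝ) ≤ d := by exact_mod_cast hd
  obtain ⟨r, hr⟩ : ∃ r : ℝ, r = (d : ℝ) / 2 - 1 := ⟨_, rfl⟩
  have hr0 : 0 ≤ r := by linarith
  rw [← hr, show (d : ℝ) / 2 = r + 1 by linarith]
  have hzero : besselI (r + 1) 0 / besselI r 0 = 0 := by
    rw [besselI_zero_right (by positivity), zero_div]
  have hpos {κ : ℝ} (hκ : 0 < κ) : 0 < besselI (r + 1) κ / besselI r κ :=
    div_pos (besselI_pos (by positivity) hκ) (besselI_pos hr0 hκ)
  refine ⟨fun x hx y _ hxy => ?_, fun κ hκ => ?_, fun κ hκ => ?_⟩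
  · rcases (Set.mem_Ici.1 hx).eq_or_lt with rfl | hx0
    · simpa only [hzero] using hpos hxy
    · exact besselI_ratio_lt hr0 hx0 hxy
  · rcases hκ.eq_or_lt with rfl | h
    · simp [hzero]
    · exact ⟨(hpos h).le, besselI_ratio_lt_one hr0 h⟩
  · rcases hκ.eq_or_lt with rfl | h
    · simp [hzero]
    · exact iff_of_false (hpos h).ne' h.ne'
end

section
/- For x in S^1 (the circle) and large κ, the von Mises density f(x; μ, κ) = e^{κ cos(x−μ)} / (2π I_0(κ)) converges uniformly on compact neighborhoods of μ to the normal density with mean μ and variance 1/κ, i.e., sup_x | f(x;μ,κ) − √(κ/(2π)) e^{−κ(x−μ)²/2} | → 0 as κ → ∞. -/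
open scoped RealInnerProductSpace BigOperators ENNReal NNReal Classical
open MeasureTheory Filter Real ProbabilityTheory Asymptotics

lemma integral_cos_pow_symm_add_two (n : ℕ) :
    ∫ x in (-π)..π, cos x ^ (n + 2) = (n + 1) / (n + 2) * ∫ x in (-π)..π, cos x ^ n := by
  rw [integral_cos_pow]
  simp

lemma integral_cos_pow_symm_odd (m : ℕ) : ∫ x in (-π)..π, cos x ^ (2 * m + 1) = 0 := by
  induction m with
  | zero => simp
  | succ m ih =>
    rw [show 2 * (m + 1) + 1 = 2 * m + 1 + 2 by ring, integral_cos_pow_symm_add_two, ih, mul_zero]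

lemma integral_cos_pow_symm_even (m : ℕ) :
    ∫ x in (-π)..π, cos x ^ (2 * m) =
      2 * π * ((2 * m).factorial / (4 ^ m * (m.factorial : ℝ) ^ 2)) := by
  induction m with
  | zero => simp; ring
  | succ m ih =>
    have h : ((2 * (m + 1)).factorial : ℝ) = (2 * m + 2) * (2 * m + 1) * (2 * m).factorial := by
      rw [show 2 * (m + 1) = 2 * m + 1 + 1 by ring, Nat.factorial_succ, Nat.factorial_succ]
      push_cast
      ring
    rw [h, show 2 * (m + 1) = 2 * m + 2 by ring, integral_cos_pow_symm_add_two, ih,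
      Nat.factorial_succ]
    have hm : (m.factorial : ℝ) ≠ 0 := by positivity
    push_cast
    field_simp
    ring

lemma hasSum_integral_exp_mul_cos (κ : ℝ) :
    HasSum (fun n : ℕ => κ ^ n / n.factorial * ∫ x in (-π)..π, cos x ^ n)
      (∫ x in (-π)..π, exp (κ * cos x)) := by
  have h := intervalIntegral.hasSum_integral_of_dominated_convergence
    (μ := volume) (a := -π) (b := π)
    (F := fun (n : ℕ) x => κ ^ n / n.factorial * cos x ^ n)
    (f := fun x => exp (κ * cos x)) (fun n _ => |κ| ^ n / n.factorial)
    (fun n => by fun_prop) ?_ ?_ ?_ ?_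
  · simpa only [intervalIntegral.integral_const_mul] using h
  · refine fun n => .of_forall fun x _ => ?_
    rw [norm_mul, norm_div, norm_pow, norm_pow, RCLike.norm_natCast, Real.norm_eq_abs,
      Real.norm_eq_abs]
    exact mul_le_of_le_one_right (by positivity) (pow_le_one₀ (abs_nonneg _) (abs_cos_le_one x))
  · exact .of_forall fun x _ => Real.summable_pow_div_factorial |κ|
  · exact intervalIntegrable_const
  · refine .of_forall fun x _ => ?_
    have := NormedSpace.expSeries_div_hasSum_exp (κ * cos x)
    rw [← Real.exp_eq_exp_ℝ] at this
    simpa only [mul_pow, mul_div_right_comm] using this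

lemma two_pi_mul_besselI_zero {κ : ℝ} (hκ : 0 < κ) :
    2 * π * besselI 0 κ = ∫ x in (-π)..π, exp (κ * cos x) := by
  have h := hasSum_integral_exp_mul_cos κ
  rw [← (mul_right_injective₀ (two_ne_zero (α := ℕ))).hasSum_iff] at h
  · rw [← h.tsum_eq, besselI, ← tsum_mul_left]
    refine tsum_congr fun m => ?_
    have hpow : (κ / 2) ^ (2 * (m : ℝ) + 0) = (κ / 2) ^ (2 * m) := by
      rw [add_zero, ← Real.rpow_natCast]
      push_cast
      rfl
    have hm : (m.factorial : ℝ) ≠ 0 := by positivity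
    have h2m : ((2 * m).factorial : ℝ) ≠ 0 := by positivity
    rw [hpow, add_zero, Real.Gamma_nat_eq_factorial]
    simp only [Function.comp_apply]
    rw [integral_cos_pow_symm_even, div_pow, pow_mul 2 2 m]
    norm_num
    field_simp
  · intro n hn
    obtain ⟨m, rfl | rfl⟩ := n.even_or_odd'
    · exact absurd ⟨m, rfl⟩ hn
    · rw [integral_cos_pow_symm_odd, mul_zero]

lemma cos_le_one_sub_sq_div_two_add (x : ℝ) : cos x ≤ 1 - x ^ 2 / 2 + x ^ 4 / 2 := by
  by_cases h : |x| ≤ 1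
  · have h1 := (abs_le.1 (cos_bound h)).2
    rw [Even.pow_abs (by decide : Even 4)] at h1
    nlinarith [sq_nonneg (x ^ 2)]
  · have h1 : 1 ≤ x ^ 2 := (one_le_sq_iff_one_le_abs x).2 (not_le.1 h).le
    nlinarith [cos_le_one x]

lemma cos_sub_one_le_neg_sq_div_five {x : ℝ} (hx : |x| ≤ π) : cos x - 1 ≤ -(x ^ 2 / 5) := by
  have h := cos_le_one_sub_mul_cos_sq hx
  have h2 : 1 / 5 ≤ 2 / π ^ 2 := by
    rw [div_le_div_iff₀ (by norm_num) (by positivity)]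
    nlinarith [pi_lt_d2, pi_pos]
  nlinarith [mul_le_mul_of_nonneg_right h2 (sq_nonneg x)]

lemma abs_exp_cos_sub_gaussian_le {κ x : ℝ} (hκ : 0 < κ) (hx : |x| ≤ π) :
    |exp (κ * (cos x - 1)) - exp (-(κ * x ^ 2) / 2)| ≤ 100 / κ * exp (-(κ / 10) * x ^ 2) := by
  have hlow : -(κ * x ^ 2) / 2 ≤ κ * (cos x - 1) := by
    nlinarith [mul_le_mul_of_nonneg_left (one_sub_sq_div_two_le_cos (x := x)) hκ.le]
  rw [abs_of_nonneg (sub_nonneg.2 (exp_le_exp.2 hlow))]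
  have hfac : exp (κ * (cos x - 1)) - exp (-(κ * x ^ 2) / 2) ≤
      exp (κ * (cos x - 1)) * (κ * x ^ 4 / 2) := by
    have h1 : exp (-(κ * x ^ 2) / 2) =
        exp (κ * (cos x - 1)) * exp (-(κ * x ^ 2) / 2 - κ * (cos x - 1)) := by
      rw [← exp_add]; congr 1; ring
    have h2 := add_one_le_exp (-(κ * x ^ 2) / 2 - κ * (cos x - 1))
    have h3 := mul_le_mul_of_nonneg_left (cos_le_one_sub_sq_div_two_add x) hκ.le
    rw [h1, ← mul_one_sub]
    exact mul_le_mul_of_nonneg_left (by linarith) (exp_pos _).le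
  have hdec : exp (κ * (cos x - 1)) ≤ exp (-(κ / 10) * x ^ 2) * exp (-(κ * x ^ 2 / 10)) := by
    rw [← exp_add, exp_le_exp]
    nlinarith [mul_le_mul_of_nonneg_left (cos_sub_one_le_neg_sq_div_five hx) hκ.le]
  have hquad : exp (-(κ * x ^ 2 / 10)) * (κ * x ^ 4 / 2) ≤ 100 / κ := by
    have h1 := quadratic_le_exp_of_nonneg (x := κ * x ^ 2 / 10) (by positivity)
    have h2 : 0 ≤ κ * x ^ 2 := by positivity
    rw [exp_neg, inv_mul_le_iff₀ (exp_pos _), mul_div_assoc', le_div_iff₀ hκ]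
    nlinarith
  calc _ ≤ _ := hfac
    _ ≤ exp (-(κ / 10) * x ^ 2) * exp (-(κ * x ^ 2 / 10)) * (κ * x ^ 4 / 2) :=
      mul_le_mul_of_nonneg_right hdec (by positivity)
    _ = exp (-(κ * x ^ 2 / 10)) * (κ * x ^ 4 / 2) * exp (-(κ / 10) * x ^ 2) := by ring
    _ ≤ _ := mul_le_mul_of_nonneg_right hquad (exp_pos _).le

lemma gaussian_tail_le {κ x : ℝ} (hκ : 0 < κ) (hx : 1 ≤ |x|) :
    exp (-(κ * x ^ 2) / 2) ≤ 100 / κ * exp (-(κ / 10) * x ^ 2) := by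
  have h1 : 1 ≤ x ^ 2 := (one_le_sq_iff_one_le_abs x).2 hx
  have h2 : exp (-(κ * x ^ 2) / 2) =
      exp (-(2 * (κ * x ^ 2) / 5)) * exp (-(κ / 10) * x ^ 2) := by
    rw [← exp_add]; congr 1; ring
  rw [h2]
  refine mul_le_mul_of_nonneg_right ?_ (exp_pos _).le
  have h3 := add_one_le_exp (2 * (κ * x ^ 2) / 5)
  rw [exp_neg, inv_le_comm₀ (exp_pos _) (by positivity), inv_div]
  nlinarith

lemma abs_integral_exp_cos_sub_gaussian_le {κ : ℝ} (hκ : 0 < κ) :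
    |(∫ x in (-π)..π, exp (κ * (cos x - 1))) - √(2 * π / κ)| ≤ 100 / κ * √(10 * π / κ) := by
  have hG : ∫ x : ℝ, exp (-(κ * x ^ 2) / 2) = √(2 * π / κ) := by
    convert integral_gaussian (κ / 2) using 2
    · ext x; congr 1; ring
    · field_simp
  have hB : ∫ x : ℝ, 100 / κ * exp (-(κ / 10) * x ^ 2) = 100 / κ * √(10 * π / κ) := by
    rw [integral_const_mul, integral_gaussian]
    congr 2
    field_simp
  have hGi : Integrable fun x : ℝ => exp (-(κ * x ^ 2) / 2) := by
    convert integrable_exp_neg_mul_sq (half_pos hκ) using 3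
    ring
  have hBi : Integrable fun x : ℝ => 100 / κ * exp (-(κ / 10) * x ^ 2) :=
    (integrable_exp_neg_mul_sq (by positivity)).const_mul _
  have hEi : Integrable ((Set.Ioc (-π) π).indicator fun x => exp (κ * (cos x - 1))) := by
    rw [integrable_indicator_iff measurableSet_Ioc]
    exact Continuous.integrableOn_Ioc (by fun_prop)
  rw [intervalIntegral.integral_of_le (by linarith [pi_pos]),
    ← integral_indicator measurableSet_Ioc, ← hG, ← hB, ← integral_sub hEi hGi]
  rw [← Real.norm_eq_abs]
  refine norm_integral_le_of_norm_le hBi (.of_forall fun x => ?_)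
  rw [Real.norm_eq_abs]
  by_cases hx : x ∈ Set.Ioc (-π) π
  · rw [Set.indicator_of_mem hx]
    exact abs_exp_cos_sub_gaussian_le hκ (abs_le.2 ⟨hx.1.le, hx.2⟩)
  · rw [Set.indicator_of_notMem hx, zero_sub, abs_neg, abs_of_pos (exp_pos _)]
    refine gaussian_tail_le hκ ?_
    by_contra! h
    have := abs_lt.1 h
    exact hx ⟨by linarith [pi_gt_three], by linarith [pi_gt_three]⟩

lemma tendsto_sqrt_mul_integral_exp_cos :
    Tendsto (fun κ : ℝ => √(κ / (2 * π)) *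
      |√(κ / (2 * π)) * (∫ x in (-π)..π, exp (κ * (cos x - 1))) - 1|) atTop (nhds 0) := by
  have hlim : Tendsto (fun κ : ℝ => 50 / π * √(10 * π / κ)) atTop (nhds 0) := by
    have h : Tendsto (fun κ : ℝ => √(10 * π / κ)) atTop (nhds √0) :=
      (tendsto_const_nhds.div_atTop tendsto_id).sqrt
    simpa using h.const_mul (50 / π)
  refine squeeze_zero' (.of_forall fun κ => by positivity) ?_ hlim
  filter_upwards [eventually_gt_atTop 0] with κ hκ
  have h := abs_integral_exp_cos_sub_gaussian_le hκ
  set J := ∫ x in (-π)..π, exp (κ * (cos x - 1))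
  have hA : √(κ / (2 * π)) * √(2 * π / κ) = 1 := by
    rw [← sqrt_mul (by positivity), div_mul_div_cancel₀ (by positivity), div_self hκ.ne', sqrt_one]
  have hAA : √(κ / (2 * π)) * √(κ / (2 * π)) = κ / (2 * π) := mul_self_sqrt (by positivity)
  have hJ : √(κ / (2 * π)) * J - 1 = √(κ / (2 * π)) * (J - √(2 * π / κ)) := by
    rw [mul_sub, hA]
  rw [hJ, abs_mul, abs_of_nonneg (sqrt_nonneg _), ← mul_assoc, hAA]
  calc κ / (2 * π) * |J - √(2 * π / κ)| ≤ κ / (2 * π) * (100 / κ * √(10 * π / κ)) := by gcongr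
    _ = 50 / π * √(10 * π / κ) := by field_simp; norm_num

lemma tendsto_inv_integral_exp_cos_sub_sqrt :
    Tendsto (fun κ : ℝ => |(∫ x in (-π)..π, exp (κ * (cos x - 1)))⁻¹ - √(κ / (2 * π))|)
      atTop (nhds 0) := by
  have h0 := tendsto_sqrt_mul_integral_exp_cos
  have hlim := h0.const_mul 2
  rw [mul_zero] at hlim
  refine squeeze_zero' (.of_forall fun κ => abs_nonneg _) ?_ hlim
  filter_upwards [h0.eventually_le_const (u := 1 / 2) (by norm_num),
    eventually_ge_atTop (2 * π)] with κ hsmall hκ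
  have hA : 1 ≤ √(κ / (2 * π)) := by
    rw [one_le_sqrt, one_le_div (by positivity)]
    exact hκ
  set J := ∫ x in (-π)..π, exp (κ * (cos x - 1))
  set A := √(κ / (2 * π))
  have hAJ : 1 / 2 ≤ A * J := by
    have h1 : |A * J - 1| ≤ 1 / 2 :=
      (le_mul_of_one_le_left (abs_nonneg _) hA).trans hsmall
    linarith [(abs_le.1 h1).1]
  have hJ : 0 < J := pos_of_mul_pos_right (by linarith : 0 < A * J) (by linarith)
  have h2 : J⁻¹ ≤ 2 * A := by
    rw [inv_le_iff_one_le_mul₀ hJ]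
    linarith
  have h3 : J⁻¹ - A = -(J⁻¹ * (A * J - 1)) := by
    field_simp
    ring
  rw [h3, abs_neg, abs_mul, abs_of_pos (inv_pos.2 hJ), ← mul_assoc]
  gcongr

/-- the von Mises density converges uniformly on compact neighborhoods of `μ`
to the normal density with mean `μ` and variance `1/κ` as `κ → ∞`. -/
theorem vonMises_normal_approx (μ : ℝ) (a : ℝ) (ha : 0 < a) (ha' : a < Real.pi) :
    Tendsto (fun κ : ℝ =>
        ⨆ x : Set.Icc (μ - a) (μ + a),
          |Real.exp (κ * Real.cos ((x : ℝ) - μ)) / (2 * Real.pi * besselI 0 κ) -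
            Real.sqrt (κ / (2 * Real.pi)) * Real.exp (-(κ * ((x : ℝ) - μ) ^ 2) / 2)|)
      atTop (nhds 0) := by
  have hA : Tendsto (fun κ : ℝ => √(κ / (2 * π)) * (100 / κ)) atTop (nhds 0) := by
    have hlim : Tendsto (fun κ : ℝ => (50 / π) * (√(κ / (2 * π)))⁻¹) atTop (nhds 0) := by
      have h : Tendsto (fun κ : ℝ => √(κ / (2 * π))) atTop atTop :=
        tendsto_sqrt_atTop.comp (tendsto_id.atTop_div_const (by positivity))
      simpa using h.inv_tendsto_atTop.const_mul (50 / π)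
    refine hlim.congr' ?_
    filter_upwards [eventually_gt_atTop 0] with κ hκ
    have hs : √(κ / (2 * π)) ≠ 0 := (sqrt_pos.2 (by positivity)).ne'
    have hAA : √(κ / (2 * π)) ^ 2 = κ / (2 * π) := sq_sqrt (by positivity)
    rw [← div_eq_mul_inv, div_eq_iff hs, mul_right_comm, ← sq, hAA]
    field_simp
    norm_num
  have hlim := tendsto_inv_integral_exp_cos_sub_sqrt.add hA
  rw [add_zero] at hlim
  refine squeeze_zero' (.of_forall fun κ => Real.iSup_nonneg fun x => abs_nonneg _) ?_ hlim
  filter_upwards [eventually_gt_atTop 0] with κ hκ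
  refine Real.iSup_le (fun x => ?_) (by positivity)
  obtain ⟨x, hx⟩ := x
  have hu : |x - μ| ≤ π := abs_le.2 ⟨by linarith [hx.1], by linarith [hx.2]⟩
  simp only
  set u := x - μ
  have hexp : ∀ t, exp (κ * cos t) = exp κ * exp (κ * (cos t - 1)) := fun t => by
    rw [← exp_add]; congr 1; ring
  rw [two_pi_mul_besselI_zero hκ]
  simp only [hexp]
  rw [intervalIntegral.integral_const_mul, mul_div_mul_left _ _ (exp_pos κ).ne']
  set J := ∫ x in (-π)..π, exp (κ * (cos x - 1))
  set A := √(κ / (2 * π))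
  have hE : exp (κ * (cos u - 1)) ≤ 1 :=
    exp_le_one_iff.2 (mul_nonpos_of_nonneg_of_nonpos hκ.le (by linarith [cos_le_one u]))
  have hdiff := abs_exp_cos_sub_gaussian_le hκ hu
  have hG : exp (-(κ / 10) * u ^ 2) ≤ 1 := exp_le_one_iff.2 (by nlinarith [sq_nonneg u])
  have hdiff' := hdiff.trans (mul_le_of_le_one_right (by positivity) hG)
  set E := exp (κ * (cos u - 1))
  set G := exp (-(κ * u ^ 2) / 2)
  calc |E / J - A * G| = |E * (J⁻¹ - A) + A * (E - G)| := by congr 1; ring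
    _ ≤ |E * (J⁻¹ - A)| + |A * (E - G)| := abs_add_le _ _
    _ = E * |J⁻¹ - A| + A * |E - G| := by
      rw [abs_mul, abs_mul, abs_of_pos (exp_pos _), abs_of_nonneg (sqrt_nonneg _)]
    _ ≤ |J⁻¹ - A| + A * (100 / κ) :=
      add_le_add (mul_le_of_le_one_left (abs_nonneg _) hE)
        (mul_le_mul_of_nonneg_left hdiff' (sqrt_nonneg _))
end
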